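/- arXiv:1206.5577 — 7 statements merged into one kernel-verified Lean document; each statement's English description precedes it below -/
import Mathlib

section
/- Let k ≥ 1 and let 0 < n_1 < n_2 < ⋯ < n_k be strictly increasing positive integers. Then ∑_{i=1}^{k} (−1)^{k−i} n_i² ≥ 2 n_k − 1. -/
theorem alternating_sum_Icc_succ {R : Type*} [CommRing R] (f : ℕ → R) (k : ℕ) :
    ∑ i ∈ Finset.Icc 1 (k + 1), (-1 : R) ^ (k + 1 - i) * f i =
      f (k + 1) - ∑ i ∈ Finset.Icc 1 k, (-1 : R) ^ (k - i) * f i := by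
  rw [Finset.sum_Icc_succ_top (by omega), sub_eq_neg_add, ← Finset.sum_neg_distrib]
  congr 1
  · refine Finset.sum_congr rfl fun i hi => ?_
    rw [Nat.succ_sub (Finset.mem_Icc.mp hi).2, pow_succ]
    ring
  · simp

theorem alternating_sum_sq_bounds (k : ℕ) (hk : 1 ≤ k) (n : ℕ → ℤ)
    (hpos : 0 < n 1)
    (hmono : ∀ i, 1 ≤ i → i < k → n i < n (i + 1)) :
    0 < n k ∧ 2 * n k - 1 ≤ ∑ i ∈ Finset.Icc 1 k, (-1 : ℤ) ^ (k - i) * (n i) ^ 2 ∧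
      ∑ i ∈ Finset.Icc 1 k, (-1 : ℤ) ^ (k - i) * (n i) ^ 2 ≤ (n k) ^ 2 := by
  induction k, hk using Nat.le_induction with
  | base =>
    refine ⟨hpos, ?_, ?_⟩ <;> simp
    nlinarith [sq_nonneg (n 1 - 1)]
  | succ k hk ih =>
    obtain ⟨hn, hlower, hupper⟩ := ih fun i hi hik => hmono i hi (by omega)
    have hlt := hmono k hk (by omega)
    rw [alternating_sum_Icc_succ fun i => (n i) ^ 2]
    refine ⟨by omega, ?_, by linarith⟩
    nlinarith

/-- If `0 < n 1 < n 2 < ⋯ < n k` (`k ≥ 1`) are strictly increasing positive integers,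
then `∑_{i=1}^{k} (−1)^{k−i} (n i)² ≥ 2 (n k) − 1`. -/
theorem alternating_sum_sq_ge (k : ℕ) (hk : 1 ≤ k) (n : ℕ → ℤ)
    (hpos : 0 < n 1)
    (hmono : ∀ i, 1 ≤ i → i < k → n i < n (i + 1)) :
    2 * n k - 1 ≤ ∑ i ∈ Finset.Icc 1 k, (-1 : ℤ) ^ (k - i) * (n i) ^ 2 :=
  (alternating_sum_sq_bounds k hk n hpos hmono).2.1
end

section
/- Let q, r, s, w be integers with q ≥ 1, r ≥ 2, s ≥ 1, w ≥ 2, let ε ∈ {1, −1}, and let p be an integer satisfying p·(q r w² − 1) = s q² r² w² − ε s. Then, as rational numbers, p ≤ s q r + (3/7)·s. -/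
/-- If `q ≥ 1`, `r ≥ 2`, `s ≥ 1`, `w ≥ 2` are integers, `ε = ±1`, and
`p·(q r w² − 1) = s q² r² w² − ε s`, then `p ≤ s q r + (3/7) s` as rational numbers. -/
theorem satellite_slope_bound (q r s w p ε : ℤ) (hq : 1 ≤ q) (hr : 2 ≤ r) (hs : 1 ≤ s)
    (hw : 2 ≤ w) (hε : ε = 1 ∨ ε = -1)
    (hp : p * (q * r * w ^ 2 - 1) = s * q ^ 2 * r ^ 2 * w ^ 2 - ε * s) :
    (p : ℚ) ≤ (s : ℚ) * q * r + (3 / 7) * s := by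
  have hqr : 2 ≤ q * r := by nlinarith
  have hw4 : 4 ≤ w ^ 2 := by nlinarith
  have hqrw : 4 * (q * r) ≤ q * r * w ^ 2 := by nlinarith
  have hD : 0 < q * r * w ^ 2 - 1 := by linarith
  have hdiff : (p - s * (q * r)) * (q * r * w ^ 2 - 1) = s * (q * r - ε) := by
    linear_combination hp
  have hε' : -1 ≤ ε := by omega
  have hbound : 7 * (q * r - ε) ≤ 3 * (q * r * w ^ 2 - 1) := by linarith
  have hmul : 7 * (p - s * (q * r)) * (q * r * w ^ 2 - 1) ≤
      3 * s * (q * r * w ^ 2 - 1) := by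
    calc 7 * (p - s * (q * r)) * (q * r * w ^ 2 - 1) = s * (7 * (q * r - ε)) := by
          linear_combination 7 * hdiff
      _ ≤ s * (3 * (q * r * w ^ 2 - 1)) := mul_le_mul_of_nonneg_left hbound (by linarith)
      _ = 3 * s * (q * r * w ^ 2 - 1) := by ring
  have hp7 : 7 * (p - s * (q * r)) ≤ 3 * s := le_of_mul_le_mul_right hmul hD
  have hp7' : 7 * ((p : ℚ) - s * (q * r)) ≤ 3 * s := by exact_mod_cast hp7
  linarith
end

section
/- Let p, q be positive integers with q ≥ 2 and p > 2q. Let N_q = { x ∈ ZMod p : the canonical representative of x in {0,…,p−1} is < q }. Suppose φ : ZMod p → ZMod p is given by φ(x) = a·x + b, where a is a unit of ZMod p and b ∈ ZMod p, and suppose φ maps N_q bijectively onto N_q. Then either φ(x) = x for all x, or φ(x) = (q − 1) − x for all x. -/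
/-- If `x ↦ a * x + b` maps `{x : ZMod p | x.val < q}` onto itself, then the only point of this
interval that translation by `a` can move out of it is the image of the right endpoint `q - 1`. -/
theorem ZMod.eq_affine_of_add_notMem_interval {p q : ℕ} (hq : q < p) {a b : ZMod p}
    (hmaps : ∀ x : ZMod p, x.val < q → (a * x + b).val < q)
    (hsurj : ∀ y : ZMod p, y.val < q → ∃ x : ZMod p, x.val < q ∧ a * x + b = y)
    {y : ZMod p} (hy : y.val < q) (hya : ¬ (y + a).val < q) :
    y = a * ((q : ZMod p) - 1) + b := by
  have : NeZero p := ⟨by omega⟩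
  obtain ⟨x, hx, rfl⟩ := hsurj y hy
  have hlast : x.val + 1 = q := by
    by_contra hne
    refine hya ?_
    have hsucc : (x + 1).val < q := by
      rw [← ZMod.natCast_zmod_val x, ← Nat.cast_succ, ZMod.val_natCast_of_lt (by omega)]
      omega
    have := hmaps _ hsucc
    rwa [show a * x + b + a = a * (x + 1) + b by ring]
  rw [← hlast, Nat.cast_add, ZMod.natCast_zmod_val]
  simp

/-- Let `q ≥ 2`, `p > 2q`, and `N_q = {x : ZMod p | x.val < q}`. If the affine bijection
`φ(x) = a·x + b` (with `a` a unit) maps `N_q` bijectively onto `N_q`, then `φ` is the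
identity or `φ(x) = (q − 1) − x`. -/
theorem affine_fixing_interval (p q : ℕ) (hq : 2 ≤ q) (hp : 2 * q < p)
    (φ : ZMod p → ZMod p) (a : (ZMod p)ˣ) (b : ZMod p)
    (hφ : ∀ x, φ x = (a : ZMod p) * x + b)
    (hbij : Set.BijOn φ {x : ZMod p | x.val < q} {x : ZMod p | x.val < q}) :
    (∀ x, φ x = x) ∨ (∀ x, φ x = ((q : ZMod p) - 1) - x) := by
  have : NeZero p := ⟨by omega⟩
  have : Fact (1 < p) := ⟨by omega⟩
  obtain ⟨d, hd, had⟩ : ∃ d < p, (a : ZMod p) = (d : ZMod p) :=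
    ⟨(a : ZMod p).val, ZMod.val_lt _, (ZMod.natCast_zmod_val _).symm⟩
  have hd0 : d ≠ 0 := by
    rintro rfl
    simp at had
  have exits_eq {n : ℕ} (hn : n < q) (hout : q ≤ (n + d) % p) :
      (n : ZMod p) = a * ((q : ZMod p) - 1) + b := by
    refine ZMod.eq_affine_of_add_notMem_interval (by omega)
      (fun x hx => hφ x ▸ hbij.mapsTo hx) (fun y hy => ?_) ?_ ?_
    · obtain ⟨x, hx, hxy⟩ := hbij.surjOn hy
      exact ⟨x, hx, hφ x ▸ hxy⟩
    · rwa [ZMod.val_natCast_of_lt (by omega)]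
    · rwa [had, ← Nat.cast_add, ZMod.val_natCast, not_lt]
  have exits_unique {m n : ℕ} (hm : m < q) (hn : n < q) (hmd : q ≤ m + d) (hnd : q ≤ n + d)
      (hmp : m + d < p) (hnp : n + d < p) : m = n := by
    have h := (exits_eq hm (by rwa [Nat.mod_eq_of_lt hmp])).trans
      (exits_eq hn (by rwa [Nat.mod_eq_of_lt hnp])).symm
    have h' := congrArg ZMod.val h
    rwa [ZMod.val_natCast_of_lt (by omega), ZMod.val_natCast_of_lt (by omega)] at h'
  have hd_cases : d = 1 ∨ d + 1 = p := by
    by_contra! hne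
    rcases le_or_gt d (p - q) with hle | hgt
    · have := exits_unique (m := q - 1) (n := q - 2) (by omega) (by omega) (by omega)
        (by omega) (by omega) (by omega)
      omega
    · have := exits_unique (m := 0) (n := 1) (by omega) (by omega) (by omega)
        (by omega) (by omega) (by omega)
      omega
  rcases hd_cases with rfl | hdp
  · left
    have h := exits_eq (n := q - 1) (by omega) (by rw [Nat.mod_eq_of_lt] <;> omega)
    rw [Nat.cast_sub (by omega), had] at h
    intro x
    rw [hφ, had]
    push_cast at h ⊢
    linear_combination -h
  · right
    have ha : (a : ZMod p) = -1 := by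
      rw [had, eq_neg_iff_add_eq_zero, ← Nat.cast_succ, Nat.succ_eq_add_one, hdp,
        ZMod.natCast_self]
    have h := exits_eq (n := 0) (by omega) (by rw [Nat.mod_eq_of_lt] <;> omega)
    intro x
    rw [hφ]
    rw [ha] at h ⊢
    push_cast at h
    linear_combination -h
end

section
/- Let p, q be positive integers with q ≥ 3 and p > 6q. In ZMod p, let N_q = { x : the canonical representative of x in {0,…,p−1} is < q }, N_q^+ = { x : the representative lies in {q,…,2q−1} }, and N_q^− = { x : the representative lies in {p−q,…,p−1} }. Suppose φ : ZMod p → ZMod p is given by φ(x) = a·x + b, where a is a unit of ZMod p and b ∈ ZMod p, and suppose φ(N_q) ⊆ N_q^− ∪ N_q^+. Then either φ(N_q) = N_q^− or φ(N_q) = N_q^+. -/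
/-- A sequence of integers in `[-q, -1] ∪ [q, 2q - 1]` that is an arithmetic progression modulo
`p > 6q` has constant sign: it is a progression in `ℤ`, with steps too small to cross the gap. -/
theorem neg_or_pos_of_second_difference_dvd {p q : ℕ} (hq : 3 ≤ q) (hp : 6 * q < p) {f : ℕ → ℤ}
    (hf : ∀ i < q, (-q ≤ f i ∧ f i < 0) ∨ (q ≤ f i ∧ f i < 2 * q))
    (hdvd : ∀ i, i + 2 < q → (p : ℤ) ∣ f i + f (i + 2) - 2 * f (i + 1)) :
    (∀ i < q, f i < 0) ∨ (∀ i < q, 0 < f i) := by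
  have hsecond : ∀ i, i + 2 < q → f i + f (i + 2) - 2 * f (i + 1) = 0 := by
    intro i hi
    refine Int.eq_zero_of_abs_lt_dvd (hdvd i hi) ?_
    have h₀ := hf i (by omega)
    have h₁ := hf (i + 1) (by omega)
    have h₂ := hf (i + 2) hi
    rw [abs_lt]
    omega
  have hstep : ∀ i, i + 1 < q → f (i + 1) - f i = f 1 - f 0 := by
    intro i
    induction i with
    | zero => simp
    | succ i ih =>
      intro hi
      have h₁ := ih (by omega)
      have h₂ := hsecond i hi
      rw [show i + 1 + 1 = i + 2 from rfl]
      omega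
  have h₀ := hf 0 (by omega)
  have h₁ := hf 1 (by omega)
  have h₂ := hf 2 (by omega)
  have hs := hsecond 0 (by omega)
  simp only [zero_add] at hs
  have hsmall : -(q : ℤ) < f 1 - f 0 ∧ f 1 - f 0 < q := by omega
  have hsign : ∀ i < q, (f i < 0 ↔ f 0 < 0) := by
    intro i
    induction i with
    | zero => simp
    | succ i ih =>
      intro hi
      have := ih (by omega)
      have := hstep i hi
      have := hf i (by omega)
      have := hf (i + 1) hi
      omega
  by_cases h : f 0 < 0
  · exact Or.inl fun i hi => (hsign i hi).2 h
  · refine Or.inr fun i hi => ?_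
    have := hsign i hi
    have := hf i hi
    omega

/-- In `ZMod p`, an injective image of the residues below `q` that is contained in the residues
`c, …, c + q - 1` fills them. -/
theorem image_val_lt_eq_of_subset {p q c : ℕ} [NeZero p] {φ : ZMod p → ZMod p}
    (hinj : Function.Injective φ) {s : Set (ZMod p)}
    (hs : ∀ x ∈ s, c ≤ x.val ∧ x.val < c + q)
    (hsub : φ '' {x : ZMod p | x.val < q} ⊆ s) : φ '' {x : ZMod p | x.val < q} = s := by
  refine Set.eq_of_subset_of_ncard_le hsub ?_ (Set.toFinite s)
  rw [Set.ncard_image_of_injective _ hinj]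
  have hcover : s ⊆ (fun x : ZMod p => x + c) '' {x : ZMod p | x.val < q} := by
    intro x hx
    obtain ⟨h₁, h₂⟩ := hs x hx
    refine ⟨((x.val - c : ℕ) : ZMod p), ?_, ?_⟩
    · have := x.val_lt
      rw [Set.mem_ofPred_eq, ZMod.val_natCast_of_lt (by omega)]
      omega
    · simp [Nat.cast_sub h₁]
  exact (Set.ncard_le_ncard hcover (Set.toFinite _)).trans
    (Set.ncard_image_le (Set.toFinite _))

/-- Let `q ≥ 3`, `p > 6q`, and in `ZMod p` let `N_q`, `N_q^+`, `N_q^−` be the sets of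
residues with canonical representatives in `{0,…,q−1}`, `{q,…,2q−1}`, `{p−q,…,p−1}`
respectively. If the affine map `φ(x) = a·x + b` (with `a` a unit) satisfies
`φ(N_q) ⊆ N_q^− ∪ N_q^+`, then `φ(N_q) = N_q^−` or `φ(N_q) = N_q^+`. -/
theorem affine_image_interval (p q : ℕ) (hq : 3 ≤ q) (hp : 6 * q < p)
    (φ : ZMod p → ZMod p) (a : (ZMod p)ˣ) (b : ZMod p)
    (hφ : ∀ x, φ x = (a : ZMod p) * x + b)
    (hsub : φ '' {x : ZMod p | x.val < q} ⊆
      {x : ZMod p | p - q ≤ x.val} ∪ {x : ZMod p | q ≤ x.val ∧ x.val < 2 * q}) :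
    φ '' {x : ZMod p | x.val < q} = {x : ZMod p | p - q ≤ x.val} ∨
      φ '' {x : ZMod p | x.val < q} = {x : ZMod p | q ≤ x.val ∧ x.val < 2 * q} := by
  have : NeZero p := ⟨by omega⟩
  have hinj : Function.Injective φ := by
    intro x y hxy
    simpa [hφ] using hxy
  have hval : ∀ i < q, (i : ZMod p).val = i := fun i hi => ZMod.val_natCast_of_lt (by omega)
  have hlift : ∀ i : ℕ, ∃ z : ℤ, i < q → (z : ZMod p) = φ i ∧
      ((z = (φ i).val - p ∧ p - q ≤ (φ i).val) ∨
        (z = (φ i).val ∧ q ≤ (φ i).val ∧ (φ i).val < 2 * q)) := by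
    intro i
    by_cases hi : i < q
    · rcases hsub ⟨(i : ZMod p), by simpa [hval i hi] using hi, rfl⟩ with h | h
      · exact ⟨(φ i).val - p, fun _ => ⟨by simp, Or.inl ⟨rfl, h⟩⟩⟩
      · exact ⟨(φ i).val, fun _ => ⟨by simp, Or.inr ⟨rfl, h⟩⟩⟩
    · exact ⟨0, fun h => absurd h hi⟩
  choose f hf using hlift
  have hsign : (∀ i < q, f i < 0) ∨ (∀ i < q, 0 < f i) := by
    refine neg_or_pos_of_second_difference_dvd hq hp (fun i hi => ?_) (fun i hi => ?_)
    · have := (hf i hi).2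
      have := (φ i).val_lt
      omega
    · rw [← ZMod.intCast_zmod_eq_zero_iff_dvd]
      push_cast
      rw [(hf i (by omega)).1, (hf (i + 1) (by omega)).1, (hf (i + 2) hi).1, hφ, hφ, hφ]
      push_cast
      ring
  refine hsign.imp (fun h => ?_) (fun h => ?_)
  · refine image_val_lt_eq_of_subset (c := p - q) hinj (fun x hx => ⟨hx, ?_⟩) ?_
    · have := x.val_lt
      omega
    · rintro _ ⟨x, hx, rfl⟩
      have h₁ := (hf x.val hx).2
      have h₂ := h x.val hx
      rw [ZMod.natCast_zmod_val] at h₁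
      rw [Set.mem_ofPred_eq]
      omega
  · refine image_val_lt_eq_of_subset (c := q) hinj (fun x hx => ⟨hx.1, ?_⟩) ?_
    · have := hx.2
      omega
    · rintro _ ⟨x, hx, rfl⟩
      have h₁ := (hf x.val hx).2
      have h₂ := h x.val hx
      have := (φ x).val_lt
      rw [ZMod.natCast_zmod_val] at h₁
      rw [Set.mem_ofPred_eq]
      omega
end

section
/- Let p be a positive integer and define f : ZMod p → ℤ by f(x) = (2·v(x) − p)², where v(x) ∈ {0,…,p−1} is the canonical representative of x. Suppose φ : ZMod p → ZMod p is given by φ(x) = a·x + b, where a is a unit of ZMod p and b ∈ ZMod p, and suppose f(φ(x)) = f(x) for all x. Then either φ(x) = x for all x, or φ(x) = −x for all x. -/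
/-- Two residues with the same value of `(2 * val - p) ^ 2` agree up to sign. -/
lemma ZMod.eq_or_eq_neg_of_sq_two_mul_val_sub_eq {p : ℕ} [NeZero p] {x y : ZMod p}
    (h : (2 * (y.val : ℤ) - p) ^ 2 = (2 * (x.val : ℤ) - p) ^ 2) : y = x ∨ y = -x := by
  rcases sq_eq_sq_iff_eq_or_eq_neg.mp h with h | h
  · left
    exact ZMod.val_injective p (by omega)
  · right
    have hsum : y.val + x.val = p := by omega
    have hcast := congrArg (Nat.cast : ℕ → ZMod p) hsum
    rw [Nat.cast_add, ZMod.natCast_zmod_val, ZMod.natCast_zmod_val, ZMod.natCast_self] at hcast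
    exact eq_neg_of_add_eq_zero_left hcast

/-- Let `p > 0` and `f : ZMod p → ℤ`, `f(x) = (2·val(x) − p)²`. If the affine map
`φ(x) = a·x + b` (with `a` a unit) satisfies `f(φ(x)) = f(x)` for all `x`, then `φ` is
the identity or `φ(x) = −x`. -/
theorem affine_preserving_correction_terms (p : ℕ) (hp : 0 < p)
    (f : ZMod p → ℤ) (hf : ∀ x, f x = (2 * (x.val : ℤ) - (p : ℤ)) ^ 2)
    (φ : ZMod p → ZMod p) (a : (ZMod p)ˣ) (b : ZMod p)
    (hφ : ∀ x, φ x = (a : ZMod p) * x + b)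
    (hpres : ∀ x, f (φ x) = f x) :
    (∀ x, φ x = x) ∨ (∀ x, φ x = -x) := by
  have : NeZero p := ⟨hp.ne'⟩
  have key (x : ZMod p) : φ x = x ∨ φ x = -x :=
    ZMod.eq_or_eq_neg_of_sq_two_mul_val_sub_eq (by rw [← hf, ← hf, hpres])
  have hb : b = 0 := by simpa [hφ] using key 0
  have ha : (a : ZMod p) = 1 ∨ (a : ZMod p) = -1 := by simpa [hφ, hb] using key 1
  exact ha.imp (fun h x => by simp [hφ, hb, h]) (fun h x => by simp [hφ, hb, h])
end

section
/- Let p ≥ 3 be an odd integer and define h : {0,1,…,p−1} → ℚ by h(i) = (2i − p − 1)²/(8p) + (−1/4 if i is even, +1/4 if i is odd). Then h(0) = h(1), h(i) ≤ h(0) for all i ∈ {0,…,p−1}, and h(i) = h(0) implies i = 0 or i = 1. -/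
/-- Let `p ≥ 3` be odd and `h(i) = (2i − p − 1)²/(8p) + (−1/4 if i even, +1/4 if i odd)`.
Then `h 0 = h 1`, `h i ≤ h 0` for all `i < p`, and `h i = h 0` implies `i = 0` or `i = 1`. -/
theorem lens_space_correction_max (p : ℕ) (hp : 3 ≤ p) (hodd : Odd p)
    (h : ℕ → ℚ)
    (hh : ∀ i, h i = (2 * (i : ℚ) - (p : ℚ) - 1) ^ 2 / (8 * (p : ℚ)) +
      (if Even i then -(1 / 4) else 1 / 4)) :
    h 0 = h 1 ∧ (∀ i < p, h i ≤ h 0) ∧ (∀ i < p, h i = h 0 → i = 0 ∨ i = 1) := by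
  have hp0 : (0 : ℚ) < p := by exact_mod_cast (by omega : 0 < p)
  have even_sub (i : ℕ) (hi : Even i) : h 0 - h i = i * (p + 1 - i) / (2 * p) := by
    rw [hh, hh, if_pos hi, if_pos Even.zero]
    push_cast
    field_simp
    ring
  have odd_sub (i : ℕ) (hi : ¬Even i) : h 0 - h i = (i - 1) * (p - i) / (2 * p) := by
    rw [hh, hh, if_neg hi, if_pos Even.zero]
    push_cast
    field_simp
    ring
  have h01 : h 0 = h 1 := by
    have := odd_sub 1 Nat.not_even_one
    simpa [sub_eq_zero] using this
  have lt_of_one_lt (i : ℕ) (hi : 1 < i) (hip : i < p) : h i < h 0 := by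
    have hi' : (1 : ℚ) < i := by exact_mod_cast hi
    have hip' : (i : ℚ) < p := by exact_mod_cast hip
    rw [← sub_pos]
    by_cases he : Even i
    · rw [even_sub i he]
      exact div_pos (mul_pos (by linarith) (by linarith)) (by linarith)
    · rw [odd_sub i he]
      exact div_pos (mul_pos (by linarith) (by linarith)) (by linarith)
  refine ⟨h01, fun i hip => ?_, fun i hip heq => ?_⟩
  · obtain rfl | rfl | hi : i = 0 ∨ i = 1 ∨ 1 < i := by omega
    · exact le_rfl
    · exact h01.ge
    · exact (lt_of_one_lt i hi hip).le
  · by_contra hne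
    exact (lt_of_one_lt i (by omega) hip).ne heq
end

section
/- Let p > q ≥ 1 be integers. Let v : ℕ → ℕ be nonincreasing with v(0) ≤ 1 and v(k) = 0 for all k ≥ 2, and let w : ℕ → ℕ satisfy w(0) = w(1) = 1 and w(k) = 0 for all k ≥ 2. For a function u : ℕ → ℕ and 0 ≤ i ≤ p−1, set δ_i(u) = max( u(⌊i/q⌋), u(⌊(p+q−1−i)/q⌋) ). If ∑_{i=0}^{p−1} δ_i(v) = ∑_{i=0}^{p−1} δ_i(w), then v(0) = 1 and v(1) = 1. -/
/-- Let `p > q ≥ 1`. Let `v : ℕ → ℕ` be nonincreasing with `v 0 ≤ 1` and `v k = 0` for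
`k ≥ 2`, and let `w : ℕ → ℕ` satisfy `w 0 = w 1 = 1` and `w k = 0` for `k ≥ 2`. If
`∑_{i=0}^{p−1} max(v(⌊i/q⌋), v(⌊(p+q−1−i)/q⌋)) = ∑_{i=0}^{p−1} max(w(⌊i/q⌋), w(⌊(p+q−1−i)/q⌋))`,
then `v 0 = 1` and `v 1 = 1`. -/
theorem correction_sum_forces_V (p q : ℕ) (hq : 1 ≤ q) (hpq : q < p)
    (v w : ℕ → ℕ) (hv_anti : Antitone v) (hv0 : v 0 ≤ 1) (hv2 : ∀ k, 2 ≤ k → v k = 0)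
    (hw0 : w 0 = 1) (hw1 : w 1 = 1) (hw2 : ∀ k, 2 ≤ k → w k = 0)
    (hsum : ∑ i ∈ Finset.range p, max (v (i / q)) (v ((p + q - 1 - i) / q)) =
            ∑ i ∈ Finset.range p, max (w (i / q)) (w ((p + q - 1 - i) / q))) :
    v 0 = 1 ∧ v 1 = 1 := by
  have hvw : ∀ k, v k ≤ w k := fun k => by
    rcases Nat.lt_or_ge k 2 with hk | hk
    · have hk_le := (hv_anti (Nat.zero_le k)).trans hv0
      interval_cases k <;> omega
    · simp [hv2 k hk]
  have hterm := (Finset.sum_eq_sum_iff_of_le fun i _ =>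
    max_le_max (hvw (i / q)) (hvw ((p + q - 1 - i) / q))).mp hsum q (Finset.mem_range.mpr hpq)
  have hdiv : 1 ≤ (p + q - 1 - q) / q := (Nat.one_le_div_iff hq).mpr (by omega)
  rw [Nat.div_self hq, max_eq_left (hv_anti hdiv), hw1] at hterm
  have hv1 : v 1 = 1 :=
    le_antisymm ((hv_anti zero_le_one).trans hv0) (hterm ▸ le_max_left _ _)
  exact ⟨le_antisymm hv0 (hv1 ▸ hv_anti zero_le_one), hv1⟩
end
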